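/- Let N ≥ 1 and σ ∈ (0,2), and let φ : ℝ^N → ℝ be bounded and twice continuously differentiable with bounded first and second partial derivatives. Then for every compact set Q ⊂ ℝ^N, sup_{x ∈ Q} | ∑_{j∈ℤ^N\{0}} (φ(x+hj) − φ(x)) κ_{σ,h,j} − (-(-Δ)^{σ/2}φ)(x) | → 0 as h → 0⁺; that is, the discrete fractional Laplacian of φ converges locally uniformly to the fractional Laplacian of φ. -/

import Mathlib

/-!
The function `j ↦ G(j, s)` is the law of `N` independent coordinates, each a difference of two
independent Poisson variables of mean `s` (a Skellam variable): the Cauchy product of two Poisson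
mass functions is the Bessel series. Writing `X` for such a random lattice vector at time
`s = t / h²`, the lattice increment is `E φ(x + hX) - φ(x)`, that is `e^{tΔ_h}φ(x) - φ(x)`. Fubini
and the substitution `s = t / h²` give (`tsum_kappa`)

  `∑_{j ≠ 0} (φ(x + hj) - φ(x)) κ_{σ,h,j}`
    `= |Γ(-σ/2)|⁻¹ ∫₀^∞ (E φ(x + hX) - φ(x)) t^{-1-σ/2} dt`,

which has the same shape as the definition of the fractional Laplacian.

For fixed `t` the characteristic function of `hX` tends to that of the centred Gaussian of variance
`2t` per coordinate, so by Lévy's continuity theorem `hX` converges weakly to the Gaussian and the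
integrand converges (`tendsto_latticeIncr`); since `φ` is Lipschitz this holds jointly in `h → 0⁺`
and `x → x₀`. The integrand is dominated uniformly in `h` and `x` by a constant times
`min(1, t) t^{-1-σ/2}`: it is bounded because `φ` is, and it is `O(t)` because `X` is symmetric, so
that the first-order Taylor term averages to zero and the second-order term is controlled by
`E|hX|² = 2Nt`. Dominated convergence yields joint convergence as `(h, x) → (0⁺, x₀)`
(`tendsto_discrete`), which gives uniform convergence on compact sets
(`uniform_of_tendsto_prod`).
-/

open MeasureTheory Real Set

/-- Modified Bessel function of the first kind of integer order `m`. -/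
noncomputable def besselI (m : ℕ) (s : ℝ) : ℝ :=
  ∑' k : ℕ, (s / 2) ^ (2 * k + m) / ((Nat.factorial k : ℝ) * (Nat.factorial (k + m)))

/-- `G(j,t) = e^{-2Nt} ∏_i I_{|j_i|}(2t)`. -/
noncomputable def G (N : ℕ) (j : Fin N → ℤ) (t : ℝ) : ℝ :=
  Real.exp (-(2 * (N : ℝ)) * t) * ∏ i, besselI (j i).natAbs (2 * t)

/-- The weight `κ_{σ,h,j} = h^{-σ} |Γ(-σ/2)|⁻¹ ∫_0^∞ G(j,t) t^{-1-σ/2} dt`. -/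
noncomputable def kappa (N : ℕ) (σ h : ℝ) (j : Fin N → ℤ) : ℝ :=
  h ^ (-σ) * |Real.Gamma (-σ / 2)|⁻¹ * ∫ t in Set.Ioi (0 : ℝ), G N j t * t ^ (-1 - σ / 2)

/-- The shifted grid point `x + h j`. -/
noncomputable def shift (N : ℕ) (h : ℝ) (x : Fin N → ℝ) (j : Fin N → ℤ) : Fin N → ℝ :=
  fun i => x i + h * (j i : ℝ)

/-- The Gaussian heat kernel `K_N(y,t) = (4πt)^{-N/2} e^{-|y|²/(4t)}`. -/
noncomputable def heatKernel (N : ℕ) (y : Fin N → ℝ) (t : ℝ) : ℝ :=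
  (4 * Real.pi * t) ^ (-(N : ℝ) / 2) * Real.exp (-(∑ i, (y i) ^ 2) / (4 * t))

/-- The heat semigroup `(e^{tΔ}φ)(x) = ∫ φ(x−y) K_N(y,t) dy`. -/
noncomputable def heatSG (N : ℕ) (φ : (Fin N → ℝ) → ℝ) (t : ℝ) (x : Fin N → ℝ) : ℝ :=
  ∫ y : Fin N → ℝ, φ (x - y) * heatKernel N y t

/-- The fractional Laplacian
`(-(-Δ)^{σ/2}φ)(x) = |Γ(-σ/2)|⁻¹ ∫_0^∞ ((e^{tΔ}φ)(x) − φ(x)) t^{-1-σ/2} dt`. -/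
noncomputable def fracLap (N : ℕ) (σ : ℝ) (φ : (Fin N → ℝ) → ℝ) (x : Fin N → ℝ) : ℝ :=
  |Real.Gamma (-σ / 2)|⁻¹ * ∫ t in Set.Ioi (0 : ℝ), (heatSG N φ t x - φ x) * t ^ (-1 - σ / 2)

open ProbabilityTheory Filter Topology
open scoped NNReal ENNReal

/-! ### The one-dimensional lattice heat kernel as a Skellam law -/

/-- The Skellam law of parameter `s`: the distribution of the difference of two independent
Poisson variables of mean `s`. It is the law at time `s` of the simple random walk on `ℤ` that jumps
to each of its two neighbours at rate `1`. -/
noncomputable def skellam (s : ℝ≥0) : Measure ℤ :=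
  ((poissonMeasure s).prod (poissonMeasure s)).map (fun p => (p.1 : ℤ) - (p.2 : ℤ))

instance (s : ℝ≥0) : IsProbabilityMeasure (skellam s) :=
  Measure.isProbabilityMeasure_map .of_discrete

instance (s : ℝ≥0) : (skellam s).IsNegInvariant := by
  constructor
  rw [Measure.neg, skellam, Measure.map_map .of_discrete .of_discrete]
  conv_rhs => rw [← Measure.prod_swap, Measure.map_map .of_discrete .of_discrete]
  congr 1
  ext p
  simp

/-- The series of `I_m(2s)` is, up to the factor `e^{-2s}`, the sum over `k` of the probabilities
that the larger Poisson variable is `k + m` and the smaller one is `k`. -/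
lemma skellam_aux (s : ℝ≥0) (m : ℕ) :
    ∑' k : ℕ, (poissonMeasure s).real {k + m} * (poissonMeasure s).real {k}
      = Real.exp (-2 * s) * besselI m (2 * s) := by
  rw [besselI, ← tsum_mul_left]
  congr 1 with k
  rw [poissonMeasure_real_singleton, poissonMeasure_real_singleton,
    show (-2 * (s : ℝ)) = -s + -s by ring, Real.exp_add]
  rw [show 2 * (s : ℝ) / 2 = s by ring, pow_add, pow_add, two_mul, pow_add]
  field_simp

lemma skellam_singleton (s : ℝ≥0) (j : ℤ) :
    (skellam s).real {j} = Real.exp (-2 * s) * besselI j.natAbs (2 * s) := by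
  have key : ∀ m : ℕ, (skellam s).real {(m : ℤ)} = Real.exp (-2 * s) * besselI m (2 * s) := by
    intro m
    rw [← skellam_aux, measureReal_def, skellam, Measure.map_apply .of_discrete (by measurability)]
    have hset : (fun p : ℕ × ℕ => (p.1 : ℤ) - (p.2 : ℤ)) ⁻¹' {(m : ℤ)}
        = ⋃ k : ℕ, ({k + m} : Set ℕ) ×ˢ ({k} : Set ℕ) := by
      ext ⟨a, b⟩
      simp only [mem_preimage, mem_singleton_iff, mem_iUnion, mem_prod]
      constructor
      · intro h
        exact ⟨b, by omega, rfl⟩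
      · rintro ⟨k, rfl, rfl⟩
        push_cast
        ring
    rw [hset, measure_iUnion]
    · simp_rw [Measure.prod_prod]
      rw [ENNReal.tsum_toReal_eq (fun k => by finiteness)]
      simp [measureReal_def]
    · intro a b hab
      refine Set.disjoint_left.2 ?_
      rintro ⟨u, v⟩ ⟨_, h1⟩ ⟨_, h2⟩
      exact hab (h1.symm.trans h2)
    · intro k
      exact (measurableSet_singleton _).prod (measurableSet_singleton _)
  rcases Int.natAbs_eq j with h | h
  · have := key j.natAbs
    rwa [← h] at this
  · have hneg : (skellam s).real {j} = (skellam s).real {-j} := by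
      rw [measureReal_def, measureReal_def, ← Measure.measure_neg (skellam s) {j}]
      simp
    have := key j.natAbs
    rwa [show (j.natAbs : ℤ) = -j by omega, ← hneg] at this

/-- The size-biasing identity `E[n f(n-1)] = s E[f(n)]` for Poisson weights. -/
lemma hasSum_poisson_shift (s : ℝ≥0) {f : ℕ → ℝ} {c : ℝ}
    (hf : HasSum (fun n : ℕ => Real.exp (-s) * (s : ℝ) ^ n / (n.factorial : ℝ) * f n) c) :
    HasSum (fun n : ℕ => Real.exp (-s) * (s : ℝ) ^ n / (n.factorial : ℝ) * (n * f (n - 1)))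
      (s * c) := by
  rw [← hasSum_nat_add_iff' 1]
  simp only [Finset.range_one, Finset.sum_singleton, Nat.cast_zero, zero_mul, mul_zero, sub_zero]
  convert! hf.mul_left (s : ℝ) using 1
  ext n
  rw [Nat.factorial_succ, pow_succ, Nat.add_sub_cancel]
  push_cast
  have : (n : ℝ) + 1 ≠ 0 := by positivity
  field_simp

lemma hasSum_poisson_mean (s : ℝ≥0) :
    HasSum (fun n : ℕ => Real.exp (-s) * (s : ℝ) ^ n / (n.factorial : ℝ) * (n : ℝ)) s := by
  have h := hasSum_poisson_shift s (f := fun _ => 1) (c := 1)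
    (by simpa using hasSum_one_poissonMeasure s)
  simpa using h

lemma hasSum_poisson_sq (s : ℝ≥0) :
    HasSum (fun n : ℕ => Real.exp (-s) * (s : ℝ) ^ n / (n.factorial : ℝ) * (n : ℝ) ^ 2)
      (s * (s + 1)) := by
  have h := hasSum_poisson_shift s (f := fun n => (n : ℝ) + 1) (c := s + 1) (by
    simpa [mul_add] using (hasSum_poisson_mean s).add (hasSum_one_poissonMeasure s))
  convert h using 3 with n
  rcases n with _ | n
  · simp
  · push_cast [Nat.add_sub_cancel]
    ring

lemma integrable_poisson_id (s : ℝ≥0) : Integrable (fun n : ℕ => (n : ℝ)) (poissonMeasure s) := by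
  rw [integrable_poissonMeasure_iff]
  simpa using (hasSum_poisson_mean s).summable

lemma integrable_poisson_sq (s : ℝ≥0) :
    Integrable (fun n : ℕ => (n : ℝ) ^ 2) (poissonMeasure s) := by
  rw [integrable_poissonMeasure_iff]
  simpa using (hasSum_poisson_sq s).summable

lemma skellam_integrable_sq (s : ℝ≥0) : Integrable (fun j : ℤ => (j : ℝ) ^ 2) (skellam s) := by
  rw [skellam, integrable_map_measure .of_discrete .of_discrete]
  have h1 := (integrable_poisson_sq s).comp_fst (poissonMeasure s)
  have h2 := (integrable_poisson_sq s).comp_snd (poissonMeasure s)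
  have h3 := (integrable_poisson_id s).mul_prod (integrable_poisson_id s)
  convert (h1.add h2).sub (h3.const_mul 2) using 1
  ext p
  simp
  ring

lemma skellam_integral_sq (s : ℝ≥0) : ∫ j : ℤ, (j : ℝ) ^ 2 ∂(skellam s) = 2 * s := by
  rw [skellam, integral_map .of_discrete .of_discrete]
  have h1 := (integrable_poisson_sq s).comp_fst (poissonMeasure s)
  have h2 := (integrable_poisson_sq s).comp_snd (poissonMeasure s)
  have h3 := (integrable_poisson_id s).mul_prod (integrable_poisson_id s)
  have e1 : ∫ n : ℕ, (n : ℝ) ^ 2 ∂(poissonMeasure s) = s * (s + 1) := by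
    rw [integral_poissonMeasure]; simpa using (hasSum_poisson_sq s).tsum_eq
  have e0 : ∫ n : ℕ, (n : ℝ) ∂(poissonMeasure s) = s := by
    rw [integral_poissonMeasure]; simpa using (hasSum_poisson_mean s).tsum_eq
  have : (fun p : ℕ × ℕ => (((p.1 : ℤ) - (p.2 : ℤ) : ℤ) : ℝ) ^ 2)
      = fun p => (p.1 : ℝ) ^ 2 + (p.2 : ℝ) ^ 2 - 2 * ((p.1 : ℝ) * (p.2 : ℝ)) := by
    ext p; push_cast; ring
  have h12 : Integrable (fun p : ℕ × ℕ => (p.1 : ℝ) ^ 2 + (p.2 : ℝ) ^ 2)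
      ((poissonMeasure s).prod (poissonMeasure s)) := h1.add h2
  rw [this, integral_sub h12 (h3.const_mul 2), integral_add h1 h2, integral_const_mul,
    integral_prod_mul (fun n : ℕ => (n : ℝ)) (fun n : ℕ => (n : ℝ)), e0,
    integral_fun_fst (fun n : ℕ => (n : ℝ) ^ 2), integral_fun_snd (fun n : ℕ => (n : ℝ) ^ 2), e1]
  simp
  ring

lemma skellam_charFun (s : ℝ≥0) (h ξ : ℝ) :
    charFun ((skellam s).map (fun j : ℤ => h * (j : ℝ))) ξ
      = Complex.exp ((s * (2 * Real.cos (h * ξ) - 2) : ℝ)) := by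
  have hpos : ∀ u : ℝ, ∫ n : ℕ, Complex.exp (u * n * Complex.I) ∂(poissonMeasure s)
      = Complex.exp (s * (Complex.exp (u * Complex.I) - 1)) := by
    intro u
    rw [← charFun_map_cast_poissonMeasure, charFun_apply_real,
      integral_map .of_discrete (by fun_prop)]
    simp
  rw [charFun_apply_real, integral_map .of_discrete (by fun_prop), skellam,
    integral_map .of_discrete .of_discrete]
  have : (fun p : ℕ × ℕ => Complex.exp (ξ * ((h * (((p.1 : ℤ) - (p.2 : ℤ) : ℤ) : ℝ) : ℝ) : ℂ)
        * Complex.I))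
      = fun p => Complex.exp (((h * ξ : ℝ) : ℂ) * p.1 * Complex.I)
          * Complex.exp (((-(h * ξ) : ℝ) : ℂ) * p.2 * Complex.I) := by
    ext p
    rw [← Complex.exp_add]
    congr 1
    push_cast
    ring
  rw [this, integral_prod_mul (fun n : ℕ => Complex.exp (((h * ξ : ℝ) : ℂ) * n * Complex.I))
    (fun n : ℕ => Complex.exp (((-(h * ξ) : ℝ) : ℂ) * n * Complex.I)), hpos, hpos,
    ← Complex.exp_add]
  congr 1
  push_cast
  rw [show (2 : ℂ) * Complex.cos (h * ξ)
    = Complex.exp (h * ξ * Complex.I) + Complex.exp (-(h * ξ) * Complex.I) by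
      rw [Complex.cos]; ring]
  ring

/-! ### The lattice heat semigroup -/

/-- The law on `ℤ^N` with independent Skellam coordinates; its mass at `j` is the lattice heat
kernel `G(j,s)`. -/
noncomputable def latticeLaw (N : ℕ) (s : ℝ≥0) : Measure (Fin N → ℤ) :=
  Measure.pi (fun _ => skellam s)

instance (N : ℕ) (s : ℝ≥0) : IsProbabilityMeasure (latticeLaw N s) := by
  unfold latticeLaw; infer_instance

instance (N : ℕ) (s : ℝ≥0) : (latticeLaw N s).IsNegInvariant := by
  unfold latticeLaw; infer_instance

lemma latticeLaw_singleton (N : ℕ) (s : ℝ≥0) (j : Fin N → ℤ) :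
    (latticeLaw N s).real {j} = G N j s := by
  rw [latticeLaw, measureReal_def, Measure.pi_singleton, ENNReal.toReal_prod]
  simp_rw [← measureReal_def, skellam_singleton]
  rw [Finset.prod_mul_distrib, G, Finset.prod_const, ← Real.exp_nat_mul]
  simp only [Finset.card_univ, Fintype.card_fin]
  ring_nf

lemma latticeLaw_integrable_sq (N : ℕ) (s : ℝ≥0) :
    Integrable (fun j : Fin N → ℤ => ∑ i, (j i : ℝ) ^ 2) (latticeLaw N s) := by
  refine integrable_finsetSum _ fun i _ => ?_
  exact integrable_comp_eval (μ := fun _ : Fin N => skellam s) (i := i)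
    (f := fun k : ℤ => (k : ℝ) ^ 2) (skellam_integrable_sq s)

lemma latticeLaw_integral_sq (N : ℕ) (s : ℝ≥0) :
    ∫ j : Fin N → ℤ, ∑ i, (j i : ℝ) ^ 2 ∂(latticeLaw N s) = N * (2 * s) := by
  have hint : ∀ i ∈ Finset.univ, Integrable (fun j : Fin N → ℤ => (j i : ℝ) ^ 2)
      (latticeLaw N s) := fun i _ =>
    integrable_comp_eval (μ := fun _ : Fin N => skellam s) (i := i)
      (f := fun k : ℤ => (k : ℝ) ^ 2) (skellam_integrable_sq s)
  rw [integral_finsetSum _ hint]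
  have : ∀ i : Fin N, ∫ j : Fin N → ℤ, (j i : ℝ) ^ 2 ∂(latticeLaw N s) = 2 * s := fun i => by
    rw [← skellam_integral_sq s]
    exact integral_comp_eval (μ := fun _ : Fin N => skellam s) (i := i)
      (f := fun k : ℤ => (k : ℝ) ^ 2) .of_discrete
  simp [this]

/-- The increment `(e^{tΔ_h}φ)(x) - φ(x)` of the heat semigroup of the lattice of mesh `h`;
parabolic scaling turns time `t` into time `t/h²` on `ℤ^N`. -/
noncomputable def latticeIncr (N : ℕ) (φ : (Fin N → ℝ) → ℝ) (h t : ℝ) (x : Fin N → ℝ) : ℝ :=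
  ∫ j, (φ (shift N h x j) - φ x) ∂(latticeLaw N (t / h ^ 2).toNNReal)

section Bounds

variable {N : ℕ} {φ : (Fin N → ℝ) → ℝ} {C : ℝ}

lemma integrable_incr (hC : ∀ x, |φ x| ≤ C) (h : ℝ) (x : Fin N → ℝ) (s : ℝ≥0) :
    Integrable (fun j => φ (shift N h x j) - φ x) (latticeLaw N s) := by
  refine Integrable.of_bound (C := 2 * C) .of_discrete (ae_of_all _ fun j => ?_)
  have h1 := abs_le.1 (hC (shift N h x j))
  have h2 := abs_le.1 (hC x)
  rw [Real.norm_eq_abs, abs_le]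
  constructor <;> linarith

lemma abs_latticeIncr_le (hC : ∀ x, |φ x| ≤ C) (h t : ℝ) (x : Fin N → ℝ) :
    |latticeIncr N φ h t x| ≤ 2 * C := by
  rw [← Real.norm_eq_abs, latticeIncr]
  refine (norm_integral_le_of_norm_le_const (C := 2 * C) (ae_of_all _ fun j => ?_)).trans (by simp)
  have h1 := abs_le.1 (hC (shift N h x j))
  have h2 := abs_le.1 (hC x)
  rw [Real.norm_eq_abs, abs_le]
  constructor <;> linarith

lemma fderiv_lipschitz (hφ : ContDiff ℝ 2 φ) {K : ℝ}
    (hK : ∀ x, ‖iteratedFDeriv ℝ 2 φ x‖ ≤ K) (x y : Fin N → ℝ) :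
    ‖fderiv ℝ φ x - fderiv ℝ φ y‖ ≤ K * ‖x - y‖ := by
  have hd : Differentiable ℝ (fderiv ℝ φ) :=
    (hφ.fderiv_right (m := 1) (by norm_num)).differentiable (by norm_num)
  refine Convex.norm_image_sub_le_of_norm_fderiv_le (𝕜 := ℝ) (fun z _ => hd z) (fun z _ => ?_)
    convex_univ (mem_univ y) (mem_univ x)
  rw [← norm_iteratedFDeriv_one, norm_iteratedFDeriv_fderiv]
  exact hK z

/-- Second differences of a function with second derivative bounded by `K` are at most `2K‖z‖²`:
apply the mean value inequality to `z ↦ φ(x+z) + φ(x-z)`, whose derivative is at most `2K‖z‖`. -/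
lemma second_diff_le (hφ : ContDiff ℝ 2 φ) {K : ℝ}
    (hK : ∀ x, ‖iteratedFDeriv ℝ 2 φ x‖ ≤ K) (x z : Fin N → ℝ) :
    |φ (x + z) + φ (x - z) - 2 * φ x| ≤ 2 * K * ‖z‖ ^ 2 := by
  have hd : Differentiable ℝ φ := hφ.differentiable (by norm_num)
  have hK0 : 0 ≤ K := (norm_nonneg _).trans (hK x)
  have hder : ∀ w : Fin N → ℝ, HasFDerivAt (fun w => φ (x + w) + φ (x - w))
      (fderiv ℝ φ (x + w) - fderiv ℝ φ (x - w)) w := by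
    intro w
    have h1 := (hd (x + w)).hasFDerivAt.comp w ((hasFDerivAt_id w).const_add x)
    have h2 := (hd (x - w)).hasFDerivAt.comp w ((hasFDerivAt_id w).const_sub x)
    convert! h1.add h2 using 1
    ext v
    simp [sub_eq_add_neg]
  have hmain := Convex.norm_image_sub_le_of_norm_hasFDerivWithin_le (C := 2 * K * ‖z‖)
    (s := Metric.closedBall (0 : Fin N → ℝ) ‖z‖) (x := 0) (y := z)
    (fun w _ => (hder w).hasFDerivWithinAt) (fun w hw => ?_) (convex_closedBall _ _)
    (by simp) (by simp)
  · rw [← Real.norm_eq_abs]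
    have e : φ (x + z) + φ (x - z) - 2 * φ x
        = φ (x + z) + φ (x - z) - (φ (x + 0) + φ (x - 0)) := by
      rw [add_zero, sub_zero]; ring
    rw [e]
    refine hmain.trans (le_of_eq ?_)
    rw [sub_zero]
    ring
  · refine (fderiv_lipschitz hφ hK _ _).trans ?_
    rw [show x + w - (x - w) = (2 : ℝ) • w by rw [two_smul]; abel, norm_smul]
    have : ‖w‖ ≤ ‖z‖ := by simpa using hw
    simp only [Real.norm_ofNat]
    nlinarith

lemma sq_norm_le_sum (z : Fin N → ℝ) : ‖z‖ ^ 2 ≤ ∑ i, z i ^ 2 := by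
  have h0 : 0 ≤ ∑ i, z i ^ 2 := Finset.sum_nonneg fun i _ => sq_nonneg _
  refine (Real.le_sqrt (norm_nonneg _) h0).1 ?_
  refine (pi_norm_le_iff_of_nonneg (Real.sqrt_nonneg _)).2 fun i => ?_
  rw [Real.norm_eq_abs]
  refine Real.abs_le_sqrt ?_
  exact Finset.single_le_sum (f := fun i => z i ^ 2) (fun i _ => sq_nonneg _) (Finset.mem_univ i)

/-- By symmetry of the lattice law the first-order Taylor term integrates to zero, so the increment
is of order `t`, uniformly in the mesh. -/
lemma abs_latticeIncr_le_mul (hC : ∀ x, |φ x| ≤ C) (hφ : ContDiff ℝ 2 φ) {K : ℝ}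
    (hK : ∀ x, ‖iteratedFDeriv ℝ 2 φ x‖ ≤ K) {h t : ℝ} (hh : 0 < h) (ht : 0 < t)
    (x : Fin N → ℝ) :
    |latticeIncr N φ h t x| ≤ 2 * K * N * t := by
  set s : ℝ≥0 := (t / h ^ 2).toNNReal with hs
  have hsv : (s : ℝ) = t / h ^ 2 := Real.coe_toNNReal _ (by positivity)
  have hi := integrable_incr hC h x s
  have hneg : latticeIncr N φ h t x = ∫ j, (φ (shift N h x (-j)) - φ x) ∂(latticeLaw N s) :=
    (integral_neg_eq_self (fun j => φ (shift N h x j) - φ x) (latticeLaw N s)).symm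
  have hi' : Integrable (fun j => φ (shift N h x (-j)) - φ x) (latticeLaw N s) := hi.comp_neg
  have htwo : 2 * latticeIncr N φ h t x
      = ∫ j, (φ (shift N h x j) - φ x + (φ (shift N h x (-j)) - φ x)) ∂(latticeLaw N s) := by
    rw [integral_add hi hi', ← hneg, two_mul]
    rfl
  have hb : |2 * latticeIncr N φ h t x|
      ≤ ∫ j : Fin N → ℤ, 2 * K * h ^ 2 * ∑ i, (j i : ℝ) ^ 2 ∂(latticeLaw N s) := by
    rw [htwo, ← Real.norm_eq_abs]
    refine norm_integral_le_of_norm_le ((latticeLaw_integrable_sq N s).const_mul _)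
      (ae_of_all _ fun j => ?_)
    have e1 : shift N h x j = x + fun i => h * (j i : ℝ) := rfl
    have e2 : shift N h x (-j) = x - fun i => h * (j i : ℝ) := by
      ext i; simp [shift, sub_eq_add_neg]
    have hK0 : 0 ≤ K := (norm_nonneg _).trans (hK x)
    rw [Real.norm_eq_abs, e1, e2]
    calc _ = |φ (x + fun i => h * (j i : ℝ)) + φ (x - fun i => h * (j i : ℝ)) - 2 * φ x| := by
            congr 1; ring
      _ ≤ 2 * K * ‖fun i => h * (j i : ℝ)‖ ^ 2 := second_diff_le hφ hK x _
      _ ≤ 2 * K * ∑ i, (h * (j i : ℝ)) ^ 2 := by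
            gcongr; exact sq_norm_le_sum _
      _ = _ := by simp_rw [mul_pow, ← Finset.mul_sum]; ring
  rw [integral_const_mul, latticeLaw_integral_sq, hsv, abs_mul, abs_two] at hb
  have : 2 * K * h ^ 2 * (N * (2 * (t / h ^ 2))) = 2 * (2 * K * N * t) := by
    field_simp
  linarith

end Bounds

/-! ### Weak convergence to the Gaussian -/

lemma heatKernel_eq_prod (N : ℕ) {t : ℝ} (ht : 0 < t) (y : Fin N → ℝ) :
    heatKernel N y t = ∏ i, gaussianPDFReal 0 (2 * t).toNNReal (y i) := by
  simp_rw [gaussianPDFReal_def]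
  rw [Real.coe_toNNReal _ (by positivity), Finset.prod_mul_distrib, ← Real.exp_sum,
    Finset.prod_const, heatKernel]
  congr 1
  · rw [show 2 * π * (2 * t) = 4 * π * t by ring, Real.sqrt_eq_rpow, ← Real.rpow_neg (by positivity),
      ← Real.rpow_natCast, ← Real.rpow_mul (by positivity)]
    congr 1
    simp
    ring
  · congr 1
    rw [neg_div, Finset.sum_div, ← Finset.sum_neg_distrib]
    refine Finset.sum_congr rfl fun i _ => ?_
    rw [sub_zero, neg_div]
    ring_nf

lemma pi_gaussianReal (N : ℕ) {t : ℝ} (ht : 0 < t) :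
    Measure.pi (fun _ : Fin N => gaussianReal 0 (2 * t).toNNReal)
      = volume.withDensity (fun y => ENNReal.ofReal (heatKernel N y t)) := by
  have hv : (2 * t).toNNReal ≠ 0 := by
    rw [Ne, Real.toNNReal_eq_zero]; linarith
  refine Measure.pi_eq fun s hs => ?_
  have hrect : MeasurableSet (Set.univ.pi s) := MeasurableSet.univ_pi hs
  rw [withDensity_apply _ hrect, ← lintegral_indicator hrect]
  have hint : ∀ i, Integrable ((s i).indicator (gaussianPDFReal 0 (2 * t).toNNReal)) := fun i =>
    (integrable_gaussianPDFReal 0 _).indicator (hs i)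
  have hprod : Integrable (fun y : Fin N → ℝ =>
      ∏ i, (s i).indicator (gaussianPDFReal 0 (2 * t).toNNReal) (y i)) volume :=
    Integrable.fintype_prod hint
  have heq : (Set.univ.pi s).indicator (fun y => ENNReal.ofReal (heatKernel N y t))
      = fun y => ENNReal.ofReal
        (∏ i, (s i).indicator (gaussianPDFReal 0 (2 * t).toNNReal) (y i)) := by
    ext y
    by_cases hy : y ∈ Set.univ.pi s
    · rw [indicator_of_mem hy, heatKernel_eq_prod N ht]
      congr 1
      refine Finset.prod_congr rfl fun i _ => ?_
      rw [indicator_of_mem (hy i (mem_univ i))]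
    · rw [indicator_of_notMem hy]
      simp only [Set.mem_pi, not_forall] at hy
      obtain ⟨i, _, hi⟩ := hy
      rw [Finset.prod_eq_zero (Finset.mem_univ i) (indicator_of_notMem hi _)]
      simp
  rw [heq, ← ofReal_integral_eq_lintegral_ofReal hprod]
  · rw [integral_fintype_prod_volume_eq_prod
      (fun i => (s i).indicator (gaussianPDFReal 0 (2 * t).toNNReal)), ENNReal.ofReal_prod_of_nonneg]
    · refine Finset.prod_congr rfl fun i _ => ?_
      rw [integral_indicator (hs i), gaussianReal_apply_eq_integral _ hv]
    · intro i _
      exact integral_nonneg fun u => indicator_nonneg (fun _ _ => gaussianPDFReal_nonneg _ _ _) _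
  · refine ae_of_all _ fun y => Finset.prod_nonneg fun i _ => ?_
    exact indicator_nonneg (fun _ _ => gaussianPDFReal_nonneg _ _ _) _

lemma heatSG_eq (N : ℕ) (φ : (Fin N → ℝ) → ℝ) {t : ℝ} (ht : 0 < t) (x : Fin N → ℝ) :
    heatSG N φ t x
      = ∫ y, φ (x - y) ∂(Measure.pi (fun _ : Fin N => gaussianReal 0 (2 * t).toNNReal)) := by
  have hm : Measurable fun y : Fin N → ℝ => ENNReal.ofReal (heatKernel N y t) := by
    unfold heatKernel; fun_prop
  have h0 : ∀ y : Fin N → ℝ, 0 ≤ heatKernel N y t := fun y => by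
    unfold heatKernel; positivity
  rw [pi_gaussianReal N ht, integral_withDensity_eq_integral_toReal_smul hm
    (ae_of_all _ fun _ => ENNReal.ofReal_lt_top), heatSG]
  refine integral_congr_ae (ae_of_all _ fun y => ?_)
  simp only [smul_eq_mul, ENNReal.toReal_ofReal (h0 y)]
  ring

lemma tendsto_symbol (ξ t : ℝ) :
    Tendsto (fun h : ℝ => t / h ^ 2 * (2 * Real.cos (h * ξ) - 2)) (𝓝[>] 0) (𝓝 (-(t * ξ ^ 2))) := by
  have hlim : Tendsto (fun h : ℝ => -(t * ξ ^ 2) * Real.sinc (h * ξ / 2) ^ 2) (𝓝[>] 0)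
      (𝓝 (-(t * ξ ^ 2) * Real.sinc (0 * ξ / 2) ^ 2)) := by
    refine Tendsto.mono_left (Continuous.tendsto ?_ 0) nhdsWithin_le_nhds
    have := Real.continuous_sinc
    fun_prop
  have e0 : -(t * ξ ^ 2) * Real.sinc (0 * ξ / 2) ^ 2 = -(t * ξ ^ 2) := by simp
  rw [e0] at hlim
  refine hlim.congr' ?_
  filter_upwards [self_mem_nhdsWithin] with h hh
  have hh : 0 < h := hh
  have hcos : 2 * Real.cos (h * ξ) - 2 = -4 * Real.sin (h * ξ / 2) ^ 2 := by
    rw [Real.sin_sq_eq_half_sub]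
    ring_nf
  rw [hcos]
  by_cases hξ : ξ = 0
  · simp [hξ]
  · rw [Real.sinc_of_ne_zero (by positivity)]
    field_simp
    ring

/-- The rescaled one-dimensional lattice law at time `t`, as a measure on `ℝ`. -/
noncomputable def scaledLaw (t h : ℝ) : ProbabilityMeasure ℝ :=
  ⟨(skellam (t / h ^ 2).toNNReal).map (fun j : ℤ => h * (j : ℝ)),
    Measure.isProbabilityMeasure_map .of_discrete⟩

/-- The centred Gaussian law of variance `2t`, the law at time `t` of the process with generator
the Laplacian on `ℝ`. -/
noncomputable def gaussLaw (t : ℝ) : ProbabilityMeasure ℝ :=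
  ⟨gaussianReal 0 (2 * t).toNNReal, inferInstance⟩

/-- The characteristic functions `exp (t (2 cos (hξ) - 2) / h²)` tend to `exp (-tξ²)`, so Lévy's
theorem gives weak convergence. -/
lemma tendsto_scaledLaw {t : ℝ} (ht : 0 < t) :
    Tendsto (scaledLaw t) (𝓝[>] 0) (𝓝 (gaussLaw t)) := by
  refine tendsto_of_seq_tendsto fun h hh => ?_
  rw [ProbabilityMeasure.tendsto_iff_tendsto_charFun]
  intro ξ
  have h1 := ((Complex.continuous_exp.comp Complex.continuous_ofReal).tendsto _).comp
    ((tendsto_symbol ξ t).comp hh)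
  have e : charFun (gaussianReal 0 (2 * t).toNNReal) ξ
      = (Complex.exp ∘ Complex.ofReal) (-(t * ξ ^ 2)) := by
    have hc : (((2 * t).toNNReal : ℝ) : ℂ) = 2 * t := by
      rw [Real.coe_toNNReal _ (by positivity)]; push_cast; rfl
    rw [charFun_gaussianReal, Function.comp_apply]
    congr 1
    rw [hc]
    push_cast
    ring
  change Tendsto _ _ (𝓝 (charFun (gaussianReal 0 (2 * t).toNNReal) ξ))
  rw [e]
  refine h1.congr fun n => ?_
  change _ = charFun ((skellam (t / h n ^ 2).toNNReal).map (fun j : ℤ => h n * (j : ℝ))) ξ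
  rw [skellam_charFun, Real.coe_toNNReal _ (by positivity)]
  rfl

lemma tendsto_latticeIncr_fixed {N : ℕ} {φ : (Fin N → ℝ) → ℝ} {C : ℝ} (hC : ∀ x, |φ x| ≤ C)
    (hφ : Continuous φ) {t : ℝ} (ht : 0 < t) (x : Fin N → ℝ) :
    Tendsto (fun h => latticeIncr N φ h t x) (𝓝[>] 0) (𝓝 (heatSG N φ t x - φ x)) := by
  have hpi := ((ProbabilityMeasure.continuous_pi (ι := Fin N) (α := fun _ => ℝ)).tendsto _).comp
    (tendsto_pi_nhds.2 fun _ : Fin N => tendsto_scaledLaw ht)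
  have hmain := (ProbabilityMeasure.tendsto_iff_forall_integral_tendsto.1 hpi)
    (BoundedContinuousFunction.ofNormedAddCommGroup (fun y => φ (x - y)) (by fun_prop) C
      fun y => hC _)
  have hlim := hmain.sub_const (φ x)
  simp only [BoundedContinuousFunction.coe_ofNormedAddCommGroup] at hlim
  rw [heatSG_eq N φ ht]
  refine hlim.congr fun h => ?_
  set s : ℝ≥0 := (t / h ^ 2).toNNReal with hs
  have hmeas : ∀ i : Fin N, AEMeasurable (fun k : ℤ => h * (k : ℝ)) (skellam s) :=
    fun _ => .of_discrete
  have hmap : (Measure.pi fun _ : Fin N => (skellam s).map (fun k : ℤ => h * (k : ℝ)))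
      = (latticeLaw N s).map (fun j i => h * (j i : ℝ)) := by
    rw [latticeLaw, Measure.pi_map_pi (f := fun _ (k : ℤ) => h * (k : ℝ)) hmeas]
  have hneg : latticeIncr N φ h t x = ∫ j, (φ (shift N h x (-j)) - φ x) ∂(latticeLaw N s) :=
    (integral_neg_eq_self (fun j => φ (shift N h x j) - φ x) (latticeLaw N s)).symm
  have hi : Integrable (fun j => φ (shift N h x (-j))) (latticeLaw N s) :=
    Integrable.of_bound (C := C) .of_discrete (ae_of_all _ fun j => hC _)
  rw [hneg, integral_sub hi (integrable_const _)]
  change ∫ y, φ (x - y) ∂(Measure.pi fun _ : Fin N => (skellam s).map (fun k : ℤ => h * (k : ℝ)))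
    - φ x = _
  rw [hmap, integral_map .of_discrete (by fun_prop)]
  simp only [integral_const, probReal_univ, one_smul]
  congr 2 with j
  congr 1
  ext i
  simp [shift, sub_eq_add_neg]

/-- Translating the base point changes the increment by at most twice the oscillation, uniformly in
the mesh; so the limit may be taken jointly in the mesh and the base point. -/
lemma tendsto_latticeIncr {N : ℕ} {φ : (Fin N → ℝ) → ℝ} {C : ℝ} (hC : ∀ x, |φ x| ≤ C)
    (hφ : Differentiable ℝ φ) {L : ℝ} (hL : ∀ x, ‖fderiv ℝ φ x‖ ≤ L) {t : ℝ} (ht : 0 < t)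
    (x₀ : Fin N → ℝ) :
    Tendsto (fun p : ℝ × (Fin N → ℝ) => latticeIncr N φ p.1 t p.2) (𝓝[>] 0 ×ˢ 𝓝 x₀)
      (𝓝 (heatSG N φ t x₀ - φ x₀)) := by
  have hlip : ∀ x y, |φ x - φ y| ≤ L * ‖x - y‖ := fun x y =>
    Convex.norm_image_sub_le_of_norm_fderiv_le (𝕜 := ℝ) (fun z _ => hφ z) (fun z _ => hL z)
      convex_univ (mem_univ y) (mem_univ x)
  have h1 := (tendsto_latticeIncr_fixed hC hφ.continuous ht x₀).comp
    (tendsto_fst (f := 𝓝[>] (0 : ℝ)) (g := 𝓝 x₀))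
  have h2 : Tendsto (fun p : ℝ × (Fin N → ℝ) =>
      latticeIncr N φ p.1 t p.2 - latticeIncr N φ p.1 t x₀) (𝓝[>] 0 ×ˢ 𝓝 x₀) (𝓝 0) := by
    have hz : Tendsto (fun p : ℝ × (Fin N → ℝ) => 2 * (L * ‖p.2 - x₀‖)) (𝓝[>] 0 ×ˢ 𝓝 x₀)
        (𝓝 (2 * (L * ‖x₀ - x₀‖))) := by
      have hc : Continuous fun x : Fin N → ℝ => 2 * (L * ‖x - x₀‖) := by fun_prop
      exact (hc.tendsto x₀).comp tendsto_snd
    rw [sub_self, norm_zero, mul_zero, mul_zero] at hz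
    refine squeeze_zero_norm (fun p => ?_) hz
    rw [latticeIncr, latticeIncr,
      ← integral_sub (integrable_incr hC _ _ _) (integrable_incr hC _ _ _)]
    refine (norm_integral_le_of_norm_le_const (C := 2 * (L * ‖p.2 - x₀‖))
      (ae_of_all _ fun j => ?_)).trans (by simp)
    have a1 := hlip (shift N p.1 p.2 j) (shift N p.1 x₀ j)
    have e : shift N p.1 p.2 j - shift N p.1 x₀ j = p.2 - x₀ := by
      ext i; simp [shift]
    rw [e] at a1
    have a2 := hlip p.2 x₀
    rw [Real.norm_eq_abs]
    rw [abs_le] at *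
    constructor <;> linarith
  simpa using h2.add h1

/-! ### Subordination: the weights as a time integral of the lattice heat kernel -/

lemma measurable_besselI (m : ℕ) : Measurable (besselI m) := by
  have hs : ∀ s : ℝ, Summable fun k : ℕ =>
      (s / 2) ^ (2 * k + m) / ((Nat.factorial k : ℝ) * (Nat.factorial (k + m))) := by
    intro s
    have hexp := (Real.summable_pow_div_factorial ((s / 2) ^ 2)).mul_left (|s / 2| ^ m)
    refine Summable.of_norm_bounded hexp fun k => ?_
    have h1 : (1 : ℝ) ≤ (Nat.factorial (k + m) : ℝ) := by
      exact_mod_cast Nat.factorial_pos (k + m)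
    have h2 : (0 : ℝ) < (Nat.factorial k : ℝ) := by exact_mod_cast Nat.factorial_pos k
    rw [Real.norm_eq_abs, abs_div, abs_pow, abs_of_pos (a := (k.factorial : ℝ) * _) (by positivity),
      pow_add, pow_mul, sq_abs, mul_comm (((s / 2) ^ 2) ^ k), mul_div_assoc]
    gcongr
    exact le_mul_of_one_le_right h2.le h1
  refine measurable_of_tendsto_metrizable' (atTop : Filter (Finset ℕ))
    (f := fun F s => ∑ k ∈ F,
      (s / 2) ^ (2 * k + m) / ((Nat.factorial k : ℝ) * (Nat.factorial (k + m))))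
    (fun F => by fun_prop) ?_
  exact tendsto_pi_nhds.2 fun s => (hs s).hasSum

lemma measurable_G (N : ℕ) (j : Fin N → ℤ) : Measurable (G N j) := by
  have := measurable_besselI
  unfold G
  fun_prop

lemma integrable_bound {σ : ℝ} (hσ : σ ∈ Set.Ioo (0 : ℝ) 2) (K : ℝ) :
    IntegrableOn (fun t : ℝ => K * min 1 t * t ^ (-1 - σ / 2)) (Ioi 0) := by
  obtain ⟨h0, h2⟩ := hσ
  have hsplit : Ioi (0 : ℝ) = Ioo 0 1 ∪ Ici 1 := by
    ext t; simp only [mem_Ioi, mem_union, mem_Ioo, mem_Ici]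
    constructor
    · intro h; rcases lt_or_ge t 1 with h1 | h1 <;> simp [h, h1]
    · rintro (h | h) <;> linarith
  rw [hsplit]
  refine IntegrableOn.union ?_ ?_
  · have := ((intervalIntegral.integrableOn_Ioo_rpow_iff (s := -σ / 2) (t := 1) one_pos).2
      (by linarith)).const_mul K
    refine IntegrableOn.congr_fun this (fun t ht => ?_) measurableSet_Ioo
    have : t ^ (-σ / 2) = t * t ^ (-1 - σ / 2) := by
      nth_rewrite 2 [← Real.rpow_one t]
      rw [← Real.rpow_add ht.1]
      ring_nf
    rw [min_eq_right ht.2.le, this]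
    ring
  · have := (integrableOn_Ioi_rpow_of_lt (a := -1 - σ / 2) (c := 1) (by linarith)
      one_pos).const_mul K
    rw [integrableOn_Ici_iff_integrableOn_Ioi]
    refine IntegrableOn.congr_fun this (fun t ht => ?_) measurableSet_Ioi
    have ht : 1 < t := ht
    rw [min_eq_left ht.le, mul_one]

section Fubini

variable {N : ℕ} {φ : (Fin N → ℝ) → ℝ} {C : ℝ}

/-- The first absolute moment of the increments is at most a constant times `min 1 s`: an increment
is bounded by `2C` and vanishes at `j = 0`, hence is at most `2C ∑ j_i²`. -/
lemma integral_abs_incr_le (hC : ∀ x, |φ x| ≤ C) (h : ℝ) (x : Fin N → ℝ) {s : ℝ} (hs : 0 < s) :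
    ∫ j, ‖φ (shift N h x j) - φ x‖ ∂(latticeLaw N s.toNNReal)
      ≤ (2 * C + 4 * C * N) * min 1 s := by
  have hC0 : 0 ≤ C := (abs_nonneg _).trans (hC x)
  have hd : ∀ j, ‖φ (shift N h x j) - φ x‖ ≤ 2 * C := fun j => by
    have h1 := abs_le.1 (hC (shift N h x j))
    have h2 := abs_le.1 (hC x)
    rw [Real.norm_eq_abs, abs_le]
    constructor <;> linarith
  have hi := (integrable_incr hC h x s.toNNReal).norm
  have b1 : ∫ j, ‖φ (shift N h x j) - φ x‖ ∂(latticeLaw N s.toNNReal) ≤ 2 * C := by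
    simpa using integral_mono hi (integrable_const (2 * C)) hd
  have b2 : ∫ j, ‖φ (shift N h x j) - φ x‖ ∂(latticeLaw N s.toNNReal) ≤ 4 * C * N * s := by
    have := integral_mono hi ((latticeLaw_integrable_sq N s.toNNReal).const_mul (2 * C))
      (fun j => ?_)
    · rw [integral_const_mul, latticeLaw_integral_sq, Real.coe_toNNReal _ hs.le] at this
      linarith
    · by_cases hj : j = 0
      · have : shift N h x j = x := by ext i; simp [shift, hj]
        rw [this]
        simp [hj]
      · obtain ⟨i, hi⟩ := Function.ne_iff.1 hj
        have h1 : (1 : ℝ) ≤ (j i : ℝ) ^ 2 := by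
          have h2 : (1 : ℤ) ≤ (j i) ^ 2 := by
            have : 0 < (j i) ^ 2 := by
              have : j i ≠ 0 := hi
              positivity
            omega
          exact_mod_cast h2
        have h2 : (j i : ℝ) ^ 2 ≤ ∑ i, (j i : ℝ) ^ 2 :=
          Finset.single_le_sum (f := fun i => (j i : ℝ) ^ 2) (fun i _ => sq_nonneg _)
            (Finset.mem_univ i)
        refine (hd j).trans ?_
        nlinarith
  have hN : 0 ≤ 4 * C * N := by positivity
  rcases le_total s 1 with h1 | h1
  · rw [min_eq_right h1]; nlinarith
  · rw [min_eq_left h1]; nlinarith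

/-- At a fixed time `s > 0` the series over `j` converges to the expected increment, because `G(·, s)`
is a probability mass function and the increments are bounded. -/
lemma hasSum_incr (hC : ∀ x, |φ x| ≤ C) (h : ℝ) (x : Fin N → ℝ) (σ : ℝ) {s : ℝ} (hs : 0 < s) :
    HasSum (fun j => (φ (shift N h x j) - φ x) * (G N j s * s ^ (-1 - σ / 2)))
      ((∫ j, (φ (shift N h x j) - φ x) ∂(latticeLaw N s.toNNReal)) * s ^ (-1 - σ / 2)) := by
  have hi := integrable_incr hC h x s.toNNReal
  have hsum : Summable fun j => (latticeLaw N s.toNNReal).real {j} := by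
    refine ENNReal.summable_toReal ?_
    have := lintegral_countable' (μ := latticeLaw N s.toNNReal) (fun _ => (1 : ℝ≥0∞))
    simp only [one_mul, lintegral_one, measure_univ] at this
    rw [← this]
    exact ENNReal.one_ne_top
  have hsum' : Summable fun j =>
      (latticeLaw N s.toNNReal).real {j} • (φ (shift N h x j) - φ x) := by
    refine Summable.of_norm_bounded (hsum.mul_right (2 * C)) fun j => ?_
    rw [norm_smul, Real.norm_of_nonneg measureReal_nonneg]
    gcongr
    have h1 := abs_le.1 (hC (shift N h x j))
    have h2 := abs_le.1 (hC x)
    rw [Real.norm_eq_abs, abs_le]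
    constructor <;> linarith
  have h1 := (hsum'.hasSum).mul_right (s ^ (-1 - σ / 2))
  rw [← integral_countable hi] at h1
  convert! h1 using 1
  ext j
  rw [latticeLaw_singleton, Real.coe_toNNReal _ hs.le, smul_eq_mul]
  ring

/-- Fubini and the parabolic change of variables `s = t/h²` turn the weighted lattice sum into the
Bochner subordination formula for the lattice semigroup. -/
lemma tsum_kappa (hC : ∀ x, |φ x| ≤ C) {σ : ℝ} (hσ : σ ∈ Set.Ioo (0 : ℝ) 2) {h : ℝ} (hh : 0 < h)
    (x : Fin N → ℝ) :
    ∑' j : {j : Fin N → ℤ // j ≠ 0}, (φ (shift N h x j.1) - φ x) * kappa N σ h j.1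
      = |Real.Gamma (-σ / 2)|⁻¹
        * ∫ t in Ioi (0 : ℝ), latticeIncr N φ h t x * t ^ (-1 - σ / 2) := by
  set p : ℝ := -1 - σ / 2 with hp
  set f : (Fin N → ℤ) → ℝ → ℝ := fun j s => (φ (shift N h x j) - φ x) * (G N j s * s ^ p) with hf
  have hfm : ∀ j, Measurable (f j) := fun j => by
    have := measurable_G N j
    fun_prop
  have hbd : ∀ s : ℝ, 0 < s → ∑' j, ‖f j s‖ₑ
      ≤ ENNReal.ofReal ((2 * C + 4 * C * N) * min 1 s * s ^ p) := by
    intro s hs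
    have hsp : 0 ≤ s ^ p := Real.rpow_nonneg hs.le _
    have e : ∀ j, ‖f j s‖ₑ = ‖φ (shift N h x j) - φ x‖ₑ * (latticeLaw N s.toNNReal) {j}
        * ENNReal.ofReal (s ^ p) := by
      intro j
      have hG := latticeLaw_singleton N s.toNNReal j
      rw [Real.coe_toNNReal _ hs.le] at hG
      change ‖(φ (shift N h x j) - φ x) * (G N j s * s ^ p)‖ₑ = _
      rw [← hG, enorm_mul, enorm_mul, Real.enorm_of_nonneg measureReal_nonneg, Real.enorm_of_nonneg hsp,
        ofReal_measureReal (by finiteness), mul_assoc]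
    simp_rw [e]
    rw [ENNReal.tsum_mul_right, ← lintegral_countable',
      ← ofReal_integral_norm_eq_lintegral_enorm (integrable_incr hC h x _),
      ← ENNReal.ofReal_mul (integral_nonneg fun _ => norm_nonneg _)]
    refine ENNReal.ofReal_le_ofReal ?_
    exact mul_le_mul_of_nonneg_right (integral_abs_incr_le hC h x hs) hsp
  have hfin : ∑' j, ∫⁻ s in Ioi (0 : ℝ), ‖f j s‖ₑ ≠ ∞ := by
    rw [← lintegral_tsum fun j => (hfm j).enorm.aemeasurable]
    refine ne_top_of_le_ne_top (integrable_bound hσ (2 * C + 4 * C * N)).lintegral_lt_top.ne ?_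
    exact setLIntegral_mono' measurableSet_Ioi fun s hs => hbd s hs
  have hswap := integral_tsum (fun j => (hfm j).aestronglyMeasurable) hfin
  have hlhs : ∫ s in Ioi (0 : ℝ), ∑' j, f j s
      = ∫ s in Ioi (0 : ℝ),
        (∫ j, (φ (shift N h x j) - φ x) ∂(latticeLaw N s.toNNReal)) * s ^ p :=
    setIntegral_congr_fun measurableSet_Ioi fun s hs => (hasSum_incr hC h x σ hs).tsum_eq
  have hscale : ∫ t in Ioi (0 : ℝ), latticeIncr N φ h t x * t ^ p
      = h ^ (-σ) * ∫ s in Ioi (0 : ℝ),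
        (∫ j, (φ (shift N h x j) - φ x) ∂(latticeLaw N s.toNNReal)) * s ^ p := by
    have hb : 0 < (h ^ 2)⁻¹ := by positivity
    have hcv := integral_comp_mul_left_Ioi (fun s =>
      (∫ j, (φ (shift N h x j) - φ x) ∂(latticeLaw N s.toNNReal)) * s ^ p) 0 hb
    rw [mul_zero, inv_inv, smul_eq_mul] at hcv
    have hpow : h ^ (-σ) = ((h ^ 2)⁻¹ ^ p)⁻¹ * h ^ 2 := by
      rw [← Real.rpow_natCast, ← Real.rpow_neg hh.le, ← Real.rpow_mul hh.le, ← Real.rpow_neg hh.le,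
        ← Real.rpow_add hh, hp]
      congr 1
      push_cast
      ring
    rw [hpow, mul_assoc, ← hcv, ← integral_const_mul]
    refine setIntegral_congr_fun measurableSet_Ioi fun t ht => ?_
    have ht : 0 < t := ht
    rw [Real.mul_rpow hb.le ht.le, latticeIncr, inv_mul_eq_div]
    have : (h ^ 2)⁻¹ ^ p ≠ 0 := (Real.rpow_pos_of_pos hb _).ne'
    field_simp
  have hsupp : Function.support
      (fun j => (φ (shift N h x j) - φ x) * kappa N σ h j) ⊆ {j | j ≠ 0} := by
    intro j hj h0
    apply hj
    have : shift N h x j = x := by ext i; simp [shift, h0]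
    simp [this]
  have hsub := tsum_subtype_eq_of_support_subset hsupp
  refine hsub.trans ?_
  rw [hscale, ← hlhs, hswap, ← mul_assoc, ← tsum_mul_left]
  congr 1 with j
  rw [hf]
  simp only
  rw [integral_const_mul, kappa]
  ring

lemma aestronglyMeasurable_incr (hC : ∀ x, |φ x| ≤ C) (σ : ℝ) {h : ℝ} (hh : 0 < h)
    (x : Fin N → ℝ) :
    AEStronglyMeasurable (fun t => latticeIncr N φ h t x * t ^ (-1 - σ / 2))
      (volume.restrict (Ioi (0 : ℝ))) := by
  have hmeas : AEStronglyMeasurable (fun t => latticeIncr N φ h t x)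
      (volume.restrict (Ioi (0 : ℝ))) := by
    refine aestronglyMeasurable_of_tendsto_ae (atTop : Filter (Finset (Fin N → ℤ)))
      (f := fun F t => ∑ j ∈ F, (φ (shift N h x j) - φ x)
        * (G N j (t / h ^ 2) * (t / h ^ 2) ^ (-1 - (-2 : ℝ) / 2))) (fun F => ?_) ?_
    · refine Measurable.aestronglyMeasurable ?_
      have := measurable_G N
      fun_prop
    · filter_upwards [ae_restrict_mem measurableSet_Ioi] with t ht
      have ht : 0 < t := ht
      have hts : 0 < t / h ^ 2 := by positivity
      have := hasSum_incr hC h x (-2) hts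
      have e0 : (-1 - (-2 : ℝ) / 2) = 0 := by norm_num
      rw [e0] at this ⊢
      rw [Real.rpow_zero] at this
      simpa [latticeIncr, HasSum] using this
  exact hmeas.mul (by fun_prop : Measurable fun t : ℝ => t ^ (-1 - σ / 2)).aestronglyMeasurable

end Fubini

/-! ### Passage to the limit -/

/-- Dominated convergence in the subordination formula, jointly in the mesh and the base point. -/
lemma tendsto_discrete {N : ℕ} {σ : ℝ} (hσ : σ ∈ Set.Ioo (0 : ℝ) 2)
    {φ : (Fin N → ℝ) → ℝ} (hφ : ContDiff ℝ 2 φ) {C L K : ℝ} (hC : ∀ x, |φ x| ≤ C)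
    (hL : ∀ x, ‖fderiv ℝ φ x‖ ≤ L) (hK : ∀ x, ‖iteratedFDeriv ℝ 2 φ x‖ ≤ K) (x₀ : Fin N → ℝ) :
    Tendsto (fun p : ℝ × (Fin N → ℝ) => ∑' j : {j : Fin N → ℤ // j ≠ 0},
      (φ (shift N p.1 p.2 j.1) - φ p.2) * kappa N σ p.1 j.1) (𝓝[>] 0 ×ˢ 𝓝 x₀)
      (𝓝 (fracLap N σ φ x₀)) := by
  have hC0 : 0 ≤ C := (abs_nonneg _).trans (hC 0)
  have hK0 : 0 ≤ K := (norm_nonneg _).trans (hK 0)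
  have hpos : ∀ᶠ p : ℝ × (Fin N → ℝ) in 𝓝[>] 0 ×ˢ 𝓝 x₀, 0 < p.1 :=
    tendsto_fst.eventually (self_mem_nhdsWithin (s := Ioi (0 : ℝ)))
  have hdct : Tendsto (fun p : ℝ × (Fin N → ℝ) =>
      ∫ t in Ioi (0 : ℝ), latticeIncr N φ p.1 t p.2 * t ^ (-1 - σ / 2)) (𝓝[>] 0 ×ˢ 𝓝 x₀)
      (𝓝 (∫ t in Ioi (0 : ℝ), (heatSG N φ t x₀ - φ x₀) * t ^ (-1 - σ / 2))) := by
    refine tendsto_integral_filter_of_dominated_convergence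
      (fun t => (2 * C + 2 * K * N) * min 1 t * t ^ (-1 - σ / 2)) ?_ ?_
      (integrable_bound hσ (2 * C + 2 * K * N)) ?_
    · filter_upwards [hpos] with p hp using aestronglyMeasurable_incr hC σ hp p.2
    · filter_upwards [hpos] with p hp
      filter_upwards [ae_restrict_mem measurableSet_Ioi] with t ht
      have ht : 0 < t := ht
      have hp0 : 0 ≤ t ^ (-1 - σ / 2) := Real.rpow_nonneg ht.le _
      rw [norm_mul, Real.norm_of_nonneg hp0]
      refine mul_le_mul_of_nonneg_right ?_ hp0
      rw [Real.norm_eq_abs]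
      have b1 := abs_latticeIncr_le hC p.1 t p.2
      have b2 := abs_latticeIncr_le_mul hC hφ hK hp ht p.2
      have hN : 0 ≤ 2 * K * N := by positivity
      rcases le_total t 1 with h1 | h1
      · rw [min_eq_right h1]; nlinarith
      · rw [min_eq_left h1]; linarith
    · filter_upwards [ae_restrict_mem measurableSet_Ioi] with t ht
      exact (tendsto_latticeIncr hC (hφ.differentiable (by norm_num)) hL ht x₀).mul_const _
  refine (hdct.const_mul |Real.Gamma (-σ / 2)|⁻¹).congr' ?_
  filter_upwards [hpos] with p hp
  exact (tsum_kappa hC hσ hp p.2).symm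

/-- If `D(h,x) → F(x₀)` as `(h,x) → (0⁺,x₀)` for every `x₀`, then `D(h,·) → F` uniformly on compact
sets as `h → 0⁺`: letting `h → 0⁺` with `x` fixed shows that `F` is continuous. -/
lemma uniform_of_tendsto_prod {X : Type*} [TopologicalSpace X] {D : ℝ → X → ℝ} {F : X → ℝ}
    (hD : ∀ x₀, Tendsto (fun p : ℝ × X => D p.1 p.2) (𝓝[>] 0 ×ˢ 𝓝 x₀) (𝓝 (F x₀)))
    {Q : Set X} (hQ : IsCompact Q) {ε : ℝ} (hε : 0 < ε) :
    ∀ᶠ h in 𝓝[>] (0 : ℝ), ∀ x ∈ Q, |D h x - F x| < ε := by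
  have hfix : ∀ x, Tendsto (fun h => D h x) (𝓝[>] 0) (𝓝 (F x)) := fun x =>
    (hD x).comp (tendsto_id.prodMk tendsto_const_nhds)
  refine hQ.induction_on (p := fun S => ∀ᶠ h in 𝓝[>] (0 : ℝ), ∀ x ∈ S, |D h x - F x| < ε)
    (by simp) (fun S T hST hT => hT.mono fun h hh x hx => hh x (hST hx))
    (fun S T hS hT => ?_) (fun x₀ _ => ?_)
  · filter_upwards [hS, hT] with h h1 h2 x hx
    exact hx.elim (h1 x) (h2 x)
  · have hev := (hD x₀).eventually (Metric.ball_mem_nhds (F x₀) (show 0 < ε / 3 by positivity))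
    obtain ⟨P, hP, R, hR, hPR⟩ := eventually_prod_iff.1 hev
    refine ⟨{x | R x}, mem_nhdsWithin_of_mem_nhds hR, ?_⟩
    filter_upwards [hP] with h hh x hx
    have h1 : |D h x - F x₀| < ε / 3 := by
      have := hPR hh hx
      rwa [Real.dist_eq] at this
    have h2 : |F x - F x₀| ≤ ε / 3 := by
      refine le_of_tendsto ((hfix x).sub_const (F x₀)).abs ?_
      filter_upwards [hP] with k hk
      have := hPR hk hx
      rw [Real.dist_eq] at this
      exact this.le
    rw [abs_lt] at *
    rw [abs_le] at h2
    constructor <;> linarith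

/-- the discrete fractional Laplacian of a bounded `C²_b` function converges
locally uniformly to the fractional Laplacian as `h → 0⁺`. -/
theorem stmt_13 (N : ℕ) (hN : 1 ≤ N) (σ : ℝ) (hσ : σ ∈ Set.Ioo (0 : ℝ) 2)
    (φ : (Fin N → ℝ) → ℝ) (hφ : ContDiff ℝ 2 φ)
    (hb : ∃ C : ℝ, ∀ x, |φ x| ≤ C)
    (hb1 : ∃ C : ℝ, ∀ x, ‖fderiv ℝ φ x‖ ≤ C)
    (hb2 : ∃ C : ℝ, ∀ x, ‖iteratedFDeriv ℝ 2 φ x‖ ≤ C)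
    (Q : Set (Fin N → ℝ)) (hQ : IsCompact Q) :
    ∀ ε > (0 : ℝ), ∃ δ > (0 : ℝ), ∀ h : ℝ, 0 < h → h < δ → ∀ x ∈ Q,
      |(∑' j : {j : Fin N → ℤ // j ≠ 0}, (φ (shift N h x j.1) - φ x) * kappa N σ h j.1)
        - fracLap N σ φ x| < ε := by
  obtain ⟨C, hC⟩ := hb
  obtain ⟨L, hL⟩ := hb1
  obtain ⟨K, hK⟩ := hb2
  intro ε hε
  have hev := uniform_of_tendsto_prod (D := fun h x => ∑' j : {j : Fin N → ℤ // j ≠ 0},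
      (φ (shift N h x j.1) - φ x) * kappa N σ h j.1) (F := fracLap N σ φ)
    (fun x₀ => tendsto_discrete hσ hφ hC hL hK x₀) hQ hε
  obtain ⟨δ, hδ, hsub⟩ := mem_nhdsGT_iff_exists_Ioo_subset.1 hev
  exact ⟨δ, hδ, fun h h0 h1 => hsub ⟨h0, h1⟩⟩
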